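/- arXiv:1309.3669 — 2 statements merged into one kernel-verified Lean document; each statement's English description precedes it below -/
import Mathlib

section
/- For every positive integer m ≥ 2 and every complex q with |q|<1, the power series coefficient of q^n in (1/(q;q)_∞) · h(q^m) equals C_m(n), the weighted count of m-strings along the partitions of n. -/
/-!
The parts of an `m`-string with parameters `(j, k)` are distinct and add up to `m j (j + k)`, so the
partitions containing it are obtained by adding these parts to an arbitrary partition. Interchanging
the sums over partitions and strings,
`∑_n C_m(n) q^n = (∑_λ q^|λ|) · ∑_{j ≥ 1, 0 ≤ k ≤ j} wt(j,k) (q^m)^{j(j+k)}`.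
The first factor is `1/(q;q)_∞` (`partition_gf`), the second is `h(q^m)` (`strings_gf`).

For the latter, with `x = q^m`, both sides are sums of `x^{ab}` over pairs of positive integers.
Expanding the geometric series turns `h(x)` into the sum over `a` odd, `a < 2b` minus the sum over
`a` odd, `a > 2b` (`hq_eq`), and the string side is the sum over `a ≤ b ≤ 2a` plus the sum over
`a < b < 2a`. These agree by the symmetry `(a, b) ↔ (b, a)`, used once for all pairs and once for
the pairs `(a/2, b)` with `a` even (`divisor_identity`).
-/

open Finset

/-- `h(q) = ∑_{n≥1} (-1)^{n+1} q^{n(n+1)/2}/(1-q^n)`. -/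
noncomputable def hq (q : ℂ) : ℂ :=
  ∑' n : ℕ, (-1 : ℂ) ^ n * q ^ ((n + 1) * (n + 2) / 2) / (1 - q ^ (n + 1))

/-- The weight of an m-string with parameters `j ≥ 1`, `0 ≤ k ≤ j`:
weight 1 if `k = 0` or `k = j`, weight 2 otherwise. -/
def stringWt (j k : ℕ) : ℕ := if k = 0 ∨ k = j then 1 else 2

/-- `C_m(n)`: the weighted count of m-strings along the partitions of `n`.
An m-string of a partition `p` is a choice of `j ≥ 1` and `0 ≤ k ≤ j` such that
the parts `m(1+k), m(3+k), …, m(2j-1+k)` all occur in `p`. -/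
def Cstr (m n : ℕ) : ℕ :=
  ∑ p : Nat.Partition n, ∑ j ∈ Finset.Icc 1 n, ∑ k ∈ Finset.Icc 0 j,
    if ∀ i ∈ Finset.Icc 1 j, m * (2 * i - 1 + k) ∈ p.parts then stringWt j k else 0


/-! ### The generating function of partitions -/

/-- The size of the partition encoded by `s`. A multiset `s` of naturals encodes the partition with
parts `i + 1`, `i ∈ s`; with this shift every multiset is a partition, with no positivity side
condition. -/
def psize (s : Multiset ℕ) : ℕ := (s.map (· + 1)).sum

lemma psize_add (s t : Multiset ℕ) : psize (s + t) = psize s + psize t := by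
  simp [psize]

lemma psize_replicate (c N : ℕ) : psize (Multiset.replicate c N) = c * (N + 1) := by
  simp [psize]

/-- A partition with parts at most `N + 1` is a partition with parts at most `N` together with the
multiplicity of the part `N + 1` (shifted encoding of `psize`). -/
def boundedEquiv (N : ℕ) :
    {s : Multiset ℕ // ∀ i ∈ s, i < N} × ℕ ≃ {s : Multiset ℕ // ∀ i ∈ s, i < N + 1} where
  toFun x := ⟨x.1.1 + Multiset.replicate x.2 N, by
    intro i hi
    rcases Multiset.mem_add.1 hi with h | h
    · exact (x.1.2 i h).trans (Nat.lt_succ_self N)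
    · rw [Multiset.eq_of_mem_replicate h]; exact Nat.lt_succ_self N⟩
  invFun t := (⟨t.1.filter (· < N), fun _ hi => (Multiset.mem_filter.1 hi).2⟩, t.1.count N)
  left_inv := by
    rintro ⟨⟨s, hs⟩, c⟩
    have h1 : s.filter (· < N) = s := Multiset.filter_eq_self.2 hs
    have h2 : (Multiset.replicate c N).filter (· < N) = 0 :=
      Multiset.filter_eq_nil.2 fun a ha => by simp [Multiset.eq_of_mem_replicate ha]
    have h3 : s.count N = 0 := Multiset.count_eq_zero.2 fun h => lt_irrefl _ (hs N h)
    simp [h1, h2, h3]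
  right_inv := by
    rintro ⟨t, ht⟩
    apply Subtype.ext
    ext a
    simp only [Multiset.count_add, Multiset.count_filter, Multiset.count_replicate]
    rcases lt_trichotomy a N with h | h | h
    · simp [h, h.ne']
    · simp [h]
    · have : t.count a = 0 := Multiset.count_eq_zero.2 fun h' => by
        have := ht a h'; omega
      simp [this, h.ne]

/-- Generating function of the partitions with parts at most `N`, by peeling off the largest
permitted part as a geometric series. -/
lemma bounded_gf {q : ℂ} (hq1 : ‖q‖ < 1) (N : ℕ) :
    Summable (fun s : {s : Multiset ℕ // ∀ i ∈ s, i < N} => ‖q ^ psize s.1‖) ∧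
    ∑' s : {s : Multiset ℕ // ∀ i ∈ s, i < N}, q ^ psize s.1
      = ∏ i ∈ range N, (1 - q ^ (i + 1))⁻¹ := by
  induction N with
  | zero =>
    let _ : Unique {s : Multiset ℕ // ∀ i ∈ s, i < 0} :=
      { default := ⟨0, by simp⟩
        uniq := fun s => Subtype.ext (Multiset.eq_zero_of_forall_notMem
          fun a ha => absurd (s.2 a ha) (Nat.not_lt_zero a)) }
    refine ⟨Summable.of_finite, ?_⟩
    rw [tsum_fintype, Fintype.sum_unique]
    change q ^ psize 0 = _
    simp [psize]
  | succ N ih =>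
    have hr : ‖q ^ (N + 1)‖ < 1 := by
      rw [norm_pow]; exact pow_lt_one₀ (norm_nonneg _) hq1 (Nat.succ_ne_zero N)
    have hg : Summable fun c : ℕ => ‖(q ^ (N + 1)) ^ c‖ :=
      summable_norm_geometric_of_norm_lt_one hr
    have key : ∀ x, q ^ psize (boundedEquiv N x).1 = q ^ psize x.1.1 * (q ^ (N + 1)) ^ x.2 := by
      intro x
      change q ^ psize (x.1.1 + Multiset.replicate x.2 N) = _
      rw [psize_add, psize_replicate, pow_add, ← pow_mul, mul_comm x.2]
    constructor
    · rw [← (boundedEquiv N).summable_iff]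
      refine (ih.1.mul_norm hg).congr fun x => ?_
      simp only [Function.comp, key]
    · rw [← (boundedEquiv N).tsum_eq, tsum_congr key,
        ← tsum_mul_tsum_of_summable_norm ih.1 hg, ih.2, prod_range_succ,
        tsum_geometric_of_norm_lt_one hr]

lemma tendsto_prod_inv {q : ℂ} (hq1 : ‖q‖ < 1) :
    Filter.Tendsto (fun N => ∏ i ∈ range N, (1 - q ^ (i + 1))⁻¹) Filter.atTop
      (nhds (∏' n : ℕ, (1 - q ^ (n + 1)))⁻¹) := by
  have hs : Summable fun n : ℕ => ‖-q ^ (n + 1)‖ := by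
    simp only [norm_neg]
    exact (summable_nat_add_iff 1).2 (summable_norm_geometric_of_norm_lt_one hq1)
  have hm := multipliable_one_add_of_summable hs
  have hne : ∏' n : ℕ, (1 + -q ^ (n + 1)) ≠ 0 := by
    refine tprod_one_add_ne_zero_of_summable (f := fun n : ℕ => -q ^ (n + 1)) (fun n => ?_) hs
    intro h
    have h1 : q ^ (n + 1) = 1 := by linear_combination -h
    have h2 : ‖q ^ (n + 1)‖ < 1 := by
      rw [norm_pow]; exact pow_lt_one₀ (norm_nonneg _) hq1 (Nat.succ_ne_zero n)
    rw [h1] at h2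
    simp at h2
  have := (hm.hasProd.tendsto_prod_nat).inv₀ hne
  simpa only [sub_eq_add_neg, Finset.prod_inv_distrib] using this

lemma exists_bound (s : Multiset ℕ) : ∃ N, ∀ i ∈ s, i < N :=
  ⟨s.sum + 1, fun _ hi => Nat.lt_succ_of_le (Multiset.le_sum_of_mem hi)⟩

/-- A finite sum of `‖q‖ ^ psize s` only involves partitions with bounded parts, hence is at most a
partial product for `1/(‖q‖;‖q‖)_∞`, and these partial products are bounded. -/
lemma summable_psize {q : ℂ} (hq1 : ‖q‖ < 1) :
    Summable fun s : Multiset ℕ => ‖q ^ psize s‖ := by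
  have hr : ‖((‖q‖ : ℝ) : ℂ)‖ < 1 := by simpa using hq1
  obtain ⟨C, hC⟩ := (tendsto_prod_inv hr).norm.bddAbove_range
  refine summable_of_sum_le (c := C) (fun _ => norm_nonneg _) fun T => ?_
  obtain ⟨N, hN⟩ := exists_bound (T.val.bind id)
  have hTN : ∀ s ∈ T, ∀ i ∈ s, i < N := fun s hs i hi =>
    hN i (Multiset.mem_bind.2 ⟨s, hs, hi⟩)
  obtain ⟨h1, -⟩ := bounded_gf hq1 N
  obtain ⟨-, h2⟩ := bounded_gf hr N
  have h3 : ((∑' s : {s : Multiset ℕ // ∀ i ∈ s, i < N}, ‖q ^ psize s.1‖ : ℝ) : ℂ)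
      = ∏ i ∈ range N, (1 - ((‖q‖ : ℝ) : ℂ) ^ (i + 1))⁻¹ := by
    rw [← h2, Complex.ofReal_tsum]
    simp
  have h4 := hC ⟨N, rfl⟩
  simp only [← h3, Complex.norm_real] at h4
  rw [← Finset.sum_subtype_of_mem (p := fun s : Multiset ℕ => ∀ i ∈ s, i < N)
    (fun s => ‖q ^ psize s‖) hTN]
  exact (h1.sum_le_tsum _ fun _ _ => norm_nonneg _).trans ((le_abs_self _).trans h4)

/-- Euler's `∑_λ q^|λ| = 1/(q;q)_∞`, by dominated convergence from `bounded_gf`. -/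
lemma partition_gf {q : ℂ} (hq1 : ‖q‖ < 1) :
    ∑' s : Multiset ℕ, q ^ psize s = (∏' n : ℕ, (1 - q ^ (n + 1)))⁻¹ := by
  refine tendsto_nhds_unique ?_ (tendsto_prod_inv hq1)
  have h : ∀ N, ∏ i ∈ range N, (1 - q ^ (i + 1))⁻¹
      = ∑' s : Multiset ℕ, {s : Multiset ℕ | ∀ i ∈ s, i < N}.indicator (fun s => q ^ psize s) s :=
    fun N => by
      rw [← (bounded_gf hq1 N).2, ← _root_.tsum_subtype]; rfl
  simp only [h]
  refine tendsto_tsum_of_dominated_convergence (summable_psize hq1) (fun s => ?_)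
    (Filter.Eventually.of_forall fun N s => norm_indicator_le_norm_self _ _)
  obtain ⟨M, hM⟩ := exists_bound s
  refine tendsto_const_nhds.congr' ?_
  filter_upwards [Filter.eventually_ge_atTop M] with N hN
  rw [Set.indicator_of_mem]
  exact fun i hi => (hM i hi).trans_le hN

/-! ### Lattice sums and the expansion of `h` -/

/-- The term `x ^ (a b)` attached to a pair `(a, b)`, set to `0` unless both entries are positive,
so that index sets need not mention positivity. -/
noncomputable def upr (x : ℂ) (p : ℕ × ℕ) : ℂ := if 0 < p.1 ∧ 0 < p.2 then x ^ (p.1 * p.2) else 0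

/-- `∑ x ^ (a b)` over the pairs of positive integers `(a, b) ∈ P`. -/
noncomputable def E (x : ℂ) (P : Set (ℕ × ℕ)) : ℂ := ∑' p : P, upr x p

lemma summable_upr {x : ℂ} (hx : ‖x‖ < 1) : Summable fun p => ‖upr x p‖ := by
  have h := (summable_prod_mul_pow 0 hx).norm
  have hi : Function.Injective (fun c : ℕ+ × ℕ+ => ((c.1 : ℕ), (c.2 : ℕ))) := by
    rintro ⟨a, b⟩ ⟨c, d⟩ h
    simpa using h
  refine (hi.summable_iff ?_).1 (h.congr fun c => ?_)
  · rintro ⟨a, b⟩ hab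
    rw [norm_eq_zero, upr, if_neg]
    rintro ⟨h1, h2⟩
    exact hab ⟨(⟨a, h1⟩, ⟨b, h2⟩), rfl⟩
  · simp [upr]

lemma E_union {x : ℂ} (hx : ‖x‖ < 1) {P Q R : Set (ℕ × ℕ)} (hd : Disjoint P Q)
    (hR : R = P ∪ Q) : E x R = E x P + E x Q := by
  subst hR
  have h := (summable_upr hx).of_norm
  exact (h.subtype P).tsum_union_disjoint hd (h.subtype Q)

/-- Reindexing by an injection whose image contains every pair in `P` with positive entries. -/
lemma tsum_eq_E {x : ℂ} {ι : Type*} {P : Set (ℕ × ℕ)} (g : ι → ℕ × ℕ)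
    (hg : Function.Injective g) (hP : ∀ p, p ∈ P → 0 < p.1 → 0 < p.2 → ∃ i, g i = p)
    (hgP : ∀ i, g i ∈ P) : ∑' i, upr x (g i) = E x P := by
  rw [E, _root_.tsum_subtype]
  rw [← hg.tsum_eq (f := P.indicator (upr x))]
  · exact tsum_congr fun i => (Set.indicator_of_mem (hgP i) _).symm
  · intro p hp
    have h1 : p ∈ P := Set.mem_of_indicator_ne_zero hp
    rw [Function.mem_support, Set.indicator_of_mem h1, upr] at hp
    by_cases h : 0 < p.1 ∧ 0 < p.2
    · exact hP p h1 h.1 h.2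
    · exact absurd (if_neg h) hp

/-- Transport along a bijection `P ≃ Q` (with inverse `h`) that preserves the terms. -/
lemma E_map {x : ℂ} {P Q : Set (ℕ × ℕ)} (g h : ℕ × ℕ → ℕ × ℕ)
    (hg : ∀ p ∈ P, g p ∈ Q) (hh : ∀ p ∈ Q, h p ∈ P)
    (hgh : ∀ p ∈ P, h (g p) = p) (hhg : ∀ p ∈ Q, g (h p) = p)
    (hu : ∀ p ∈ P, upr x (g p) = upr x p) : E x P = E x Q := by
  let e : P ≃ Q :=
    { toFun := fun p => ⟨g p, hg p p.2⟩
      invFun := fun p => ⟨h p, hh p p.2⟩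
      left_inv := fun p => Subtype.ext (hgh p p.2)
      right_inv := fun p => Subtype.ext (hhg p p.2) }
  rw [E, E, ← e.tsum_eq]
  exact tsum_congr fun p => (hu p p.2).symm

lemma upr_swap (x : ℂ) (p : ℕ × ℕ) : upr x p.swap = upr x p := by
  simp [upr, and_comm, mul_comm]

lemma E_swap {x : ℂ} {P Q : Set (ℕ × ℕ)} (h : ∀ a b, (a, b) ∈ P ↔ (b, a) ∈ Q) :
    E x P = E x Q :=
  E_map Prod.swap Prod.swap (fun _ hp => (h _ _).1 hp) (fun _ hp => (h _ _).2 hp)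
    (fun _ _ => rfl) (fun _ _ => rfl) (fun p _ => upr_swap x p)

/-- Coefficientwise: the number of odd divisors of `N` below `√(2N)`, minus the number of those above,
is the number of divisors of `N` in `[√(N/2), √(2N))`. Even `a = 2c` contribute nothing to the
left-hand side, by the symmetry `(c, b) ↔ (b, c)`; without the parity condition, swapping the
entries in the second sum leaves the pairs with `a < 2b` and `b ≤ 2a`. -/
lemma divisor_identity {x : ℂ} (hx : ‖x‖ < 1) :
    E x {p | p.1 % 2 = 1 ∧ p.1 < 2 * p.2} - E x {p | p.1 % 2 = 1 ∧ 2 * p.2 < p.1}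
      = E x {p | p.1 ≤ p.2 ∧ p.2 ≤ 2 * p.1} + E x {p | p.1 < p.2 ∧ p.2 < 2 * p.1} := by
  have h1 : E x {p | p.1 < 2 * p.2} = E x {p | p.1 % 2 = 1 ∧ p.1 < 2 * p.2}
      + E x {p | p.1 % 2 = 0 ∧ p.1 < 2 * p.2} := by
    apply E_union hx
    · rw [Set.disjoint_left]; simp only [Set.mem_ofPred_eq]; omega
    · ext p; simp only [Set.mem_ofPred_eq, Set.mem_union]; omega
  have h2 : E x {p | 2 * p.2 < p.1} = E x {p | p.1 % 2 = 1 ∧ 2 * p.2 < p.1}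
      + E x {p | p.1 % 2 = 0 ∧ 2 * p.2 < p.1} := by
    apply E_union hx
    · rw [Set.disjoint_left]; simp only [Set.mem_ofPred_eq]; omega
    · ext p; simp only [Set.mem_ofPred_eq, Set.mem_union]; omega
  have h3 : E x {p | p.1 % 2 = 0 ∧ p.1 < 2 * p.2} = E x {p | p.1 % 2 = 0 ∧ 2 * p.2 < p.1} := by
    refine E_map (fun p => (2 * p.2, p.1 / 2)) (fun p => (2 * p.2, p.1 / 2)) ?_ ?_ ?_ ?_ ?_
    · simp only [Set.mem_ofPred_eq]; omega
    · simp only [Set.mem_ofPred_eq]; omega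
    · rintro ⟨a, b⟩ h; simp only [Set.mem_ofPred_eq, Prod.mk.injEq] at h ⊢; omega
    · rintro ⟨a, b⟩ h; simp only [Set.mem_ofPred_eq, Prod.mk.injEq] at h ⊢; omega
    · rintro ⟨a, b⟩ h
      simp only [Set.mem_ofPred_eq] at h
      obtain ⟨c, rfl⟩ : ∃ c, a = 2 * c := ⟨a / 2, by omega⟩
      simp only [upr, Nat.mul_div_cancel_left c two_pos]
      have : (0 < 2 * b ∧ 0 < c) ↔ (0 < 2 * c ∧ 0 < b) := by omega
      simp only [this]
      rw [show 2 * b * c = 2 * c * b by ring]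
  have h4 : E x {p | 2 * p.2 < p.1} = E x {p | 2 * p.1 < p.2} := E_swap fun _ _ => Iff.rfl
  have h5 : E x {p | p.1 < 2 * p.2} = E x {p | 2 * p.1 < p.2}
      + E x {p | p.1 < 2 * p.2 ∧ p.2 ≤ 2 * p.1} := by
    apply E_union hx
    · rw [Set.disjoint_left]; simp only [Set.mem_ofPred_eq]; omega
    · ext p; simp only [Set.mem_ofPred_eq, Set.mem_union]; omega
  have h5' : E x {p | p.1 < 2 * p.2 ∧ p.2 ≤ 2 * p.1}
      = E x {p | p.1 < 2 * p.2 ∧ p.1 ≤ p.2 ∧ p.2 ≤ 2 * p.1}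
        + E x {p | p.2 < p.1 ∧ p.1 < 2 * p.2} := by
    apply E_union hx
    · rw [Set.disjoint_left]; simp only [Set.mem_ofPred_eq]; omega
    · ext p; simp only [Set.mem_ofPred_eq, Set.mem_union]; omega
  have h6 : E x {p | p.1 < 2 * p.2 ∧ p.1 ≤ p.2 ∧ p.2 ≤ 2 * p.1}
      = E x {p | p.1 ≤ p.2 ∧ p.2 ≤ 2 * p.1} := by
    -- Given `p.1 ≤ p.2`, the inequality `p.1 < 2 * p.2` fails only at the origin, where `upr` vanishes.
    have h0 : E x {p | p = (0, 0)} = 0 := by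
      rw [E, _root_.tsum_subtype]
      refine (tsum_congr fun p => ?_).trans tsum_zero
      by_cases hp : p = (0, 0)
      · subst hp; simp [upr]
      · exact Set.indicator_of_notMem (by simpa using hp) _
    rw [E_union hx (P := {p | p.1 < 2 * p.2 ∧ p.1 ≤ p.2 ∧ p.2 ≤ 2 * p.1}) (Q := {p | p = (0, 0)})
      (R := {p | p.1 ≤ p.2 ∧ p.2 ≤ 2 * p.1}), h0, add_zero]
    · rw [Set.disjoint_left]; rintro ⟨a, b⟩; simp only [Set.mem_ofPred_eq, Prod.mk.injEq]; omega
    · ext ⟨a, b⟩; simp only [Set.mem_ofPred_eq, Set.mem_union, Prod.mk.injEq]; omega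
  have h7 : E x {p | p.2 < p.1 ∧ p.1 < 2 * p.2} = E x {p | p.1 < p.2 ∧ p.2 < 2 * p.1} :=
    E_swap fun _ _ => Iff.rfl
  linear_combination -h1 + h2 - h3 - h4 + h5 + h5' + h6 + h7

/-- After expanding the geometric series, the terms of `h` have exponent `a b / 2` with
`a = n`, `b = n + 1 + 2r` of opposite parity and `a < b`. Halving the even one of `a`, `b` gives
the two sums: `n` odd the first one, `n` even the second. -/
lemma hq_eq {x : ℂ} (hx : ‖x‖ < 1) :
    hq x = E x {p | p.1 % 2 = 1 ∧ p.1 < 2 * p.2} - E x {p | p.1 % 2 = 1 ∧ 2 * p.2 < p.1} := by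
  have hS := (summable_upr hx).of_norm
  let g₁ : ℕ × ℕ → ℕ × ℕ := fun p => (2 * p.1 + 1, p.1 + 1 + p.2)
  let g₂ : ℕ × ℕ → ℕ × ℕ := fun p => (2 * p.1 + 3 + 2 * p.2, p.1 + 1)
  have i₁ : Function.Injective g₁ := by
    rintro ⟨a, b⟩ ⟨c, d⟩ h; simp only [g₁, Prod.mk.injEq] at h ⊢; omega
  have i₂ : Function.Injective g₂ := by
    rintro ⟨a, b⟩ ⟨c, d⟩ h; simp only [g₂, Prod.mk.injEq] at h ⊢; omega
  have e₁ : ∑' p, upr x (g₁ p) = E x {p | p.1 % 2 = 1 ∧ p.1 < 2 * p.2} := by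
    refine tsum_eq_E g₁ i₁ ?_ ?_
    · rintro ⟨a, b⟩ ⟨h1, h2⟩ h3 h4
      simp only at h1 h2
      exact ⟨(a / 2, b - (a / 2 + 1)), by simp only [g₁, Prod.mk.injEq]; omega⟩
    · rintro ⟨a, b⟩; simp only [g₁, Set.mem_ofPred_eq]; omega
  have e₂ : ∑' p, upr x (g₂ p) = E x {p | p.1 % 2 = 1 ∧ 2 * p.2 < p.1} := by
    refine tsum_eq_E g₂ i₂ ?_ ?_
    · rintro ⟨a, b⟩ ⟨h1, h2⟩ h3 h4
      simp only at h1 h2 h3 h4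
      exact ⟨(b - 1, (a - 2 * b) / 2), by simp only [g₂, Prod.mk.injEq]; omega⟩
    · rintro ⟨a, b⟩; simp only [g₂, Set.mem_ofPred_eq]; omega
  have s₁ : Summable fun p => upr x (g₁ p) := hS.comp_injective i₁
  have s₂ : Summable fun p => upr x (g₂ p) := hS.comp_injective i₂
  have geo : ∀ n : ℕ, ∑' r : ℕ, (x ^ (n + 1)) ^ r = (1 - x ^ (n + 1))⁻¹ := fun n =>
    tsum_geometric_of_norm_lt_one (by
      rw [norm_pow]; exact pow_lt_one₀ (norm_nonneg _) hx (Nat.succ_ne_zero n))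
  have f₁ : ∀ c : ℕ, ∑' r, upr x (g₁ (c, r)) =
      (-1 : ℂ) ^ (2 * c) * x ^ ((2 * c + 1) * (2 * c + 2) / 2) / (1 - x ^ (2 * c + 1)) := by
    intro c
    rw [div_eq_mul_inv, ← geo, ← tsum_mul_left]
    refine tsum_congr fun r => ?_
    rw [show (2 * c + 1) * (2 * c + 2) / 2 = (2 * c + 1) * (c + 1) by
      rw [show (2 * c + 1) * (2 * c + 2) = 2 * ((2 * c + 1) * (c + 1)) by ring,
        Nat.mul_div_cancel_left _ two_pos]]
    rw [pow_mul (-1 : ℂ)]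
    simp only [upr, g₁, even_two, Even.neg_pow, one_pow, one_mul]
    rw [if_pos ⟨by omega, by omega⟩, ← pow_mul, ← pow_add]
    congr 1; ring
  have f₂ : ∀ c : ℕ, -∑' r, upr x (g₂ (c, r)) =
      (-1 : ℂ) ^ (2 * c + 1) * x ^ ((2 * c + 1 + 1) * (2 * c + 1 + 2) / 2)
        / (1 - x ^ (2 * c + 1 + 1)) := by
    intro c
    rw [div_eq_mul_inv, ← geo, ← tsum_mul_left, ← tsum_neg]
    refine tsum_congr fun r => ?_
    rw [show (2 * c + 1 + 1) * (2 * c + 1 + 2) / 2 = (c + 1) * (2 * c + 3) by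
      rw [show (2 * c + 1 + 1) * (2 * c + 1 + 2) = 2 * ((c + 1) * (2 * c + 3)) by ring,
        Nat.mul_div_cancel_left _ two_pos]]
    rw [pow_succ, pow_mul (-1 : ℂ)]
    simp only [upr, g₂, even_two, Even.neg_pow, one_pow, one_mul]
    rw [if_pos ⟨by omega, by omega⟩, ← pow_mul, neg_one_mul, neg_mul, ← pow_add]
    congr 2; ring
  rw [hq, ← e₁, ← e₂, s₁.tsum_prod, s₂.tsum_prod, sub_eq_add_neg, ← tsum_neg]
  rw [tsum_congr f₁, tsum_congr f₂]
  refine (tsum_even_add_odd (f := fun n : ℕ =>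
    (-1 : ℂ) ^ n * x ^ ((n + 1) * (n + 2) / 2) / (1 - x ^ (n + 1))) ?_ ?_).symm
  · exact s₁.prod.congr f₁
  · exact s₂.prod.neg.congr f₂

/-- The weight of the string with parameters `p = (j, k)`, extended by `0` to the pairs violating
`1 ≤ j` or `k ≤ j`. -/
def swt (p : ℕ × ℕ) : ℕ := if 1 ≤ p.1 ∧ p.2 ≤ p.1 then stringWt p.1 p.2 else 0

/-- `h(x) = ∑ wt(j,k) x^{j(j+k)}`: with `l = j + k` the pairs are those with `j ≤ l ≤ 2j`, the weight
being one for membership plus one for `j < l < 2j`. -/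
lemma strings_gf {x : ℂ} (hx : ‖x‖ < 1) :
    Summable (fun p : ℕ × ℕ => ‖(swt p : ℂ) * x ^ (p.1 * (p.1 + p.2))‖) ∧
    ∑' p : ℕ × ℕ, (swt p : ℂ) * x ^ (p.1 * (p.1 + p.2)) = hq x := by
  have hS := summable_upr hx
  let g : ℕ × ℕ → ℕ × ℕ := fun p => (p.1, p.1 + p.2)
  have hg : Function.Injective g := by
    rintro ⟨a, b⟩ ⟨c, d⟩ h; simp only [g, Prod.mk.injEq] at h ⊢; omega
  let A : Set (ℕ × ℕ) := {p | p.1 ≤ p.2 ∧ p.2 ≤ 2 * p.1}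
  let B : Set (ℕ × ℕ) := {p | p.1 < p.2 ∧ p.2 < 2 * p.1}
  have key : ∀ p : ℕ × ℕ, (swt p : ℂ) * x ^ (p.1 * (p.1 + p.2))
      = A.indicator (upr x) (g p) + B.indicator (upr x) (g p) := by
    rintro ⟨j, k⟩
    simp only [Set.indicator, A, B, g, upr, swt, stringWt, Set.mem_ofPred_eq]
    by_cases h1 : 1 ≤ j ∧ k ≤ j
    · have h2 : j ≤ j + k ∧ j + k ≤ 2 * j := by omega
      have h3 : 0 < j ∧ 0 < j + k := by omega
      rw [if_pos h1, if_pos h2, if_pos h3]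
      by_cases h4 : k = 0 ∨ k = j
      · rw [if_pos h4, if_neg (by omega)]; simp
      · rw [if_neg h4, if_pos (by omega)]; push_cast; ring
    · rw [if_neg h1]
      by_cases h3 : 0 < j ∧ 0 < j + k
      · rw [if_neg (by omega), if_neg (by omega)]; simp
      · simp only [if_neg h3, ite_self]; simp
  have sA : Summable fun p => ‖A.indicator (upr x) (g p)‖ :=
    (hS.comp_injective hg).of_nonneg_of_le (fun _ => norm_nonneg _)
      (fun _ => norm_indicator_le_norm_self _ _)
  have sB : Summable fun p => ‖B.indicator (upr x) (g p)‖ :=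
    (hS.comp_injective hg).of_nonneg_of_le (fun _ => norm_nonneg _)
      (fun _ => norm_indicator_le_norm_self _ _)
  have hsupp : ∀ C : Set (ℕ × ℕ), (∀ p ∈ C, p.1 ≤ p.2) →
      ∑' p, C.indicator (upr x) (g p) = E x C := by
    intro C hC
    rw [E, _root_.tsum_subtype]
    apply hg.tsum_eq
    intro p hp
    have := hC p (Set.mem_of_indicator_ne_zero hp)
    exact ⟨(p.1, p.2 - p.1), by ext <;> simp [g]; omega⟩
  constructor
  · refine (sA.add sB).of_nonneg_of_le (fun _ => norm_nonneg _) fun p => ?_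
    rw [key]; exact norm_add_le _ _
  · rw [tsum_congr key, sA.of_norm.tsum_add sB.of_norm, hsupp A fun _ h => h.1,
      hsupp B fun _ h => h.1.le, hq_eq hx, divisor_identity hx]

/-! ### Strings inside partitions -/

/-- The shifted encoding of partitions: `s` corresponds to the partition of `psize s` with parts
`i + 1`, `i ∈ s`. -/
def partitionEquiv : Multiset ℕ ≃ Σ n, Nat.Partition n where
  toFun s := ⟨psize s, ⟨s.map (· + 1), fun {i} hi => by
    obtain ⟨a, -, rfl⟩ := Multiset.mem_map.1 hi
    exact Nat.succ_pos a, rfl⟩⟩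
  invFun p := p.2.parts.map (· - 1)
  left_inv s := by simp [Multiset.map_map]
  right_inv := by
    rintro ⟨n, p⟩
    have h : (p.parts.map (· - 1)).map (· + 1) = p.parts := by
      rw [Multiset.map_map]
      conv_rhs => rw [← Multiset.map_id p.parts]
      refine Multiset.map_congr rfl fun a ha => ?_
      have := p.parts_pos ha
      simp only [Function.comp, id]
      omega
    obtain ⟨parts, hpos, rfl⟩ := p
    have key : ∀ (t : Multiset ℕ) (ht : ∀ {i}, i ∈ t → 0 < i), t = parts →
        (⟨t.sum, ⟨t, ht, rfl⟩⟩ : Σ n, Nat.Partition n) = ⟨parts.sum, ⟨parts, hpos, rfl⟩⟩ := by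
      rintro t ht rfl
      rfl
    exact key _ _ h

lemma psize_symm {n : ℕ} (p : Nat.Partition n) : psize (partitionEquiv.symm ⟨n, p⟩) = n :=
  congrArg Sigma.fst (partitionEquiv.apply_symm_apply ⟨n, p⟩)

/-- The `m`-string with parameters `p = (j, k)`, in the shifted encoding. The truncated subtractions
are exact for `m ≥ 1`, as `i ≥ 1`. -/
def stringSet (m : ℕ) (p : ℕ × ℕ) : Multiset ℕ :=
  (Finset.Icc 1 p.1).val.map fun i => m * (2 * i - 1 + p.2) - 1

lemma stringSet_part_pos {m : ℕ} (hm : 0 < m) {i : ℕ} (hi : 1 ≤ i) (k : ℕ) :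
    0 < m * (2 * i - 1 + k) := Nat.mul_pos hm (by omega)

lemma stringSet_le_iff {m : ℕ} (hm : 0 < m) (p : ℕ × ℕ) (s : Multiset ℕ) :
    stringSet m p ≤ s ↔ ∀ i ∈ Finset.Icc 1 p.1, m * (2 * i - 1 + p.2) - 1 ∈ s := by
  have hnd : (stringSet m p).Nodup := by
    refine Multiset.Nodup.map_on ?_ (Finset.Icc 1 p.1).nodup
    intro a ha b hb hab
    have ha' := (Finset.mem_Icc.1 (Finset.mem_def.2 ha)).1
    have hb' := (Finset.mem_Icc.1 (Finset.mem_def.2 hb)).1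
    have h1 := stringSet_part_pos hm ha' p.2
    have h2 := stringSet_part_pos hm hb' p.2
    have h3 : m * (2 * a - 1 + p.2) = m * (2 * b - 1 + p.2) := by omega
    have h4 := Nat.eq_of_mul_eq_mul_left hm h3
    omega
  rw [Multiset.le_iff_subset hnd]
  constructor
  · exact fun h i hi => h (Multiset.mem_map_of_mem _ hi)
  · intro h a ha
    obtain ⟨i, hi, rfl⟩ := Multiset.mem_map.1 ha
    exact h i hi

/-- The parts of an `m`-string add up to `m (j² + j k)`. -/
lemma psize_stringSet {m : ℕ} (hm : 0 < m) (p : ℕ × ℕ) :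
    psize (stringSet m p) = m * (p.1 * (p.1 + p.2)) := by
  obtain ⟨j, k⟩ := p
  have h1 : psize (stringSet m (j, k)) = ∑ i ∈ Finset.Icc 1 j, m * (2 * i - 1 + k) := by
    rw [psize, stringSet, Multiset.map_map]
    refine Finset.sum_congr rfl fun i hi => ?_
    have := stringSet_part_pos hm (Finset.mem_Icc.1 hi).1 k
    simp only [Function.comp]
    omega
  rw [h1, ← Finset.mul_sum]
  congr 1
  clear h1
  induction j with
  | zero => simp
  | succ j ih =>
    rw [Finset.sum_Icc_succ_top (by omega), ih, show 2 * (j + 1) - 1 = 2 * j + 1 by omega]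
    ring

lemma mem_symm_iff {n : ℕ} (p : Nat.Partition n) {a : ℕ} (ha : 0 < a) :
    a - 1 ∈ partitionEquiv.symm ⟨n, p⟩ ↔ a ∈ p.parts := by
  change a - 1 ∈ p.parts.map (· - 1) ↔ _
  rw [Multiset.mem_map]
  constructor
  · rintro ⟨b, hb, hab⟩
    have := p.parts_pos hb
    rwa [show a = b by omega]
  · exact fun h => ⟨a, h, rfl⟩

/-- `C_m(n)` counts pairs (partition of `n`, string contained in it) with weight; the bound `j ≤ n`
in `Cstr` loses nothing, as a string has size at least `j`. -/
lemma Cstr_eq {m : ℕ} (hm : 0 < m) (n : ℕ) (q : ℂ) :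
    ∑ P : Nat.Partition n, ∑' p : ℕ × ℕ,
      (if stringSet m p ≤ partitionEquiv.symm ⟨n, P⟩ then
        (swt p : ℂ) * q ^ psize (partitionEquiv.symm ⟨n, P⟩) else 0) = (Cstr m n : ℂ) * q ^ n := by
  rw [Cstr]
  push_cast
  rw [Finset.sum_mul]
  refine Finset.sum_congr rfl fun P _ => ?_
  simp only [psize_symm]
  rw [tsum_eq_sum (s := (Finset.Icc 1 n) ×ˢ (Finset.Icc 0 n))]
  · rw [Finset.sum_product, Finset.sum_mul]
    refine Finset.sum_congr rfl fun j hj => ?_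
    have hj' := Finset.mem_Icc.1 hj
    rw [Finset.sum_mul]
    symm
    refine (Finset.sum_subset_zero_on_sdiff (Finset.Icc_subset_Icc le_rfl hj'.2) ?_ ?_)
    · intro k hk
      have hk' : ¬ k ≤ j := by
        simp only [Finset.mem_sdiff, Finset.mem_Icc] at hk; omega
      simp [swt, hk']
    · intro k hk
      have hk' := (Finset.mem_Icc.1 hk).2
      have hiff : stringSet m (j, k) ≤ partitionEquiv.symm ⟨n, P⟩ ↔
          ∀ i ∈ Finset.Icc 1 j, m * (2 * i - 1 + k) ∈ P.parts := by
        rw [stringSet_le_iff hm]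
        exact forall₂_congr fun i hi =>
          mem_symm_iff P (stringSet_part_pos hm (Finset.mem_Icc.1 hi).1 k)
      simp only [hiff, swt, hj'.1, hk', and_self, if_true]
      split_ifs <;> simp
  · rintro ⟨j, k⟩ hjk
    by_cases hw : 1 ≤ j ∧ k ≤ j
    · rw [if_neg]
      intro hle
      have h1 : psize (stringSet m (j, k)) ≤ n := by
        obtain ⟨t, ht⟩ := Multiset.le_iff_exists_add.1 hle
        rw [← psize_symm P, ht, psize_add]
        exact Nat.le_add_right _ _
      rw [psize_stringSet hm] at h1
      simp only at h1
      have h2 : j ≤ m * (j * (j + k)) := by nlinarith [Nat.mul_pos hm (by omega : 0 < j + k)]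
      simp only [Finset.mem_product, Finset.mem_Icc] at hjk
      omega
    · simp [swt, hw]

/-- for every `m ≥ 2` and `‖q‖ < 1`, the coefficient of `q^n` in
`(1/(q;q)_∞) · h(q^m)` is `C_m(n)`, i.e. `∑_{n≥1} C_m(n) q^n = h(q^m)/(q;q)_∞`. -/
theorem stmt1 (m : ℕ) (hm : 2 ≤ m) (q : ℂ) (hq1 : ‖q‖ < 1) :
    ∑' n : ℕ, (Cstr m n : ℂ) * q ^ n = (∏' n : ℕ, (1 - q ^ (n + 1)))⁻¹ * hq (q ^ m) := by
  have hm0 : 0 < m := by omega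
  have hx : ‖q ^ m‖ < 1 := by
    rw [norm_pow]; exact pow_lt_one₀ (norm_nonneg _) hq1 hm0.ne'
  obtain ⟨hs, ht⟩ := strings_gf hx
  -- `F` is the weight of a pair (partition, string contained in it), and `g` adds a string to an
  -- arbitrary partition: an injection whose image contains the support of `F`.
  let F : Multiset ℕ × (ℕ × ℕ) → ℂ := fun z =>
    if stringSet m z.2 ≤ z.1 then (swt z.2 : ℂ) * q ^ psize z.1 else 0
  let g : Multiset ℕ × (ℕ × ℕ) → Multiset ℕ × (ℕ × ℕ) := fun z => (z.1 + stringSet m z.2, z.2)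
  have hg : Function.Injective g := by
    rintro ⟨s, p⟩ ⟨t, r⟩ h
    simp only [g, Prod.mk.injEq] at h
    obtain ⟨h1, rfl⟩ := h
    rw [add_right_cancel h1]
  have hFg : ∀ z, F (g z) = q ^ psize z.1 * ((swt z.2 : ℂ) * (q ^ m) ^ (z.2.1 * (z.2.1 + z.2.2))) := by
    rintro ⟨s, p⟩
    simp only [F, g]
    rw [if_pos (Multiset.le_add_left _ _), psize_add, psize_stringSet hm0, pow_add, pow_mul]
    ring
  have hr : ∀ z, z ∉ Set.range g → F z = 0 := by
    rintro ⟨s, p⟩ hz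
    refine if_neg fun hle => hz ⟨(s - stringSet m p, p), ?_⟩
    simp only [g, Multiset.sub_add_cancel hle]
  have hprod := summable_mul_of_summable_norm (summable_psize hq1) hs
  have hF : Summable F := (hg.summable_iff hr).1 (hprod.congr fun z => (hFg z).symm)
  rw [← partition_gf hq1, ← ht, tsum_mul_tsum_of_summable_norm (summable_psize hq1) hs,
    ← tsum_congr hFg, hg.tsum_eq (f := F) (fun z hz => by_contra fun h => hz (hr z h)),
    hF.tsum_prod, ← partitionEquiv.symm.tsum_eq, Summable.tsum_sigma]
  · refine tsum_congr fun n => ?_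
    rw [tsum_fintype, ← Cstr_eq hm0]
  · exact partitionEquiv.symm.summable_iff.2 hF.prod
end

section
/- For positive integers n and all m ≥ 2, the q-series coefficient identity ∑_{n≥1} C_m(n) q^n = h(q^m)/(q;q)_∞ holds, and consequently the conjecture of Andrews–Chan–Kim–Osburn that h(q)/(q;q)_∞ − m·h(q^m)/(q;q)_∞ has nonnegative coefficients is equivalent to C_1(n) ≥ m·C_m(n) for all n ≥ 1. -/
/-!
A partition of `n` together with an `m`-string inside it is the same thing as the string, whose
size is `m * j * (j + k)`, and the partition formed by the remaining parts
(`card_partition_containing`). Hence `∑ C_m(n) q^n` is Euler's product `1/(q;q)_∞`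
(`hasSum_card_partition`) times `∑_{j ≥ 1, 0 ≤ k ≤ j} wt(j,k) x^(j(j+k))` at `x = q^m`
(`hasSum_Cstr`), and the point is that this last sum is `h(x)` (`hasSum_pairWt`).

Put `e = j + k`. For `j, e ≥ 1` the weight of the string, extended by `0`, is
`sign (e - j) + sign (2j - e)`. In `∑_{j,e ≥ 1} (sign (e - j) + sign (2j - e)) x^(je)` the first
term is antisymmetric under exchanging `j` and `e`, so it sums to `0`. For even `e = 2i` the
second term is `sign (j - i) x^(2ij)`, again antisymmetric, so only the odd `e` remain.
Expanding each `1/(1 - x^n)` in `h(x)` as a geometric series gives exactly this remaining sum: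
the terms with `n` odd are the pairs with `e < 2j`, those with `n` even (and sign `-1`) the pairs
with `e > 2j` (`oddPair`, `hasSum_oddWt`).

Consequently `(h(q) - m h(q^m))/(q;q)_∞ = ∑ (C_1(n) - m C_m(n)) q^n` on the unit disc, and the
equivalence is uniqueness of power series coefficients. As the right side `∑' c_n q^n` in
the statement is not assumed to converge, divergence has to be excluded as a source of junk values;
this is `nonneg_of_eq_tsum`, which uses the identity theorem.
-/

open Finset

/-! ### The generating function of partitions -/

open scoped PowerSeries.WithPiTopology in
lemma tsum_X_pow_mul (k : ℕ) (hk : 0 < k) :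
    ∑' j : ℕ, (PowerSeries.X : PowerSeries ℂ) ^ (k * j) =
      PowerSeries.mk fun n => if k ∣ n then (1 : ℂ) else 0 := by
  apply HasSum.tsum_eq
  rw [PowerSeries.WithPiTopology.hasSum_iff_hasSum_coeff]
  intro d
  rw [PowerSeries.coeff_mk]
  simp only [PowerSeries.coeff_X_pow]
  split_ifs with h
  · obtain ⟨c, rfl⟩ := h
    have e : (fun j : ℕ => if k * c = k * j then (1 : ℂ) else 0) =
        fun j => if j = c then 1 else 0 := by
      funext j
      simp only [Nat.mul_right_inj hk.ne', eq_comm]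
    rw [e]
    exact hasSum_ite_eq c (1 : ℂ)
  · convert hasSum_zero with j
    simp only [ite_eq_right_iff, one_ne_zero, imp_false]
    rintro rfl
    exact h ⟨j, rfl⟩

open scoped PowerSeries.WithPiTopology in
/-- Partitions into parts of size at most `N`, formally. -/
lemma mk_card_restricted_le (N : ℕ) :
    (PowerSeries.mk fun n => ((Nat.Partition.restricted n (· ≤ N)).card : ℂ)) =
      ∏ i ∈ range N, PowerSeries.mk fun n => if (i + 1) ∣ n then (1 : ℂ) else 0 := by
  refine (Nat.Partition.hasProd_powerSeriesMk_card_restricted ℂ (· ≤ N)).unique ?_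
  convert hasProd_prod_of_ne_finset_one (s := range N) ?_ using 1
  · refine prod_congr rfl fun i hi => ?_
    have : i + 1 ≤ N := by simpa using hi
    rw [if_pos this, tsum_X_pow_mul _ i.succ_pos]
  · intro i hi
    have : ¬ i + 1 ≤ N := by simpa using hi
    rw [if_neg this]
  · infer_instance

/-- The formal power series `A` converges absolutely at `q`, with value `v`. -/
def EvalsTo (A : PowerSeries ℂ) (q v : ℂ) : Prop :=
  (Summable fun n => ‖A.coeff n * q ^ n‖) ∧ HasSum (fun n => A.coeff n * q ^ n) v

lemma EvalsTo.mul {A B : PowerSeries ℂ} {q v w : ℂ} (hA : EvalsTo A q v) (hB : EvalsTo B q w) :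
    EvalsTo (A * B) q (v * w) := by
  have key : ∀ n, (A * B).coeff n * q ^ n =
      ∑ p ∈ antidiagonal n, (A.coeff p.1 * q ^ p.1) * (B.coeff p.2 * q ^ p.2) := by
    intro n
    rw [PowerSeries.coeff_mul, sum_mul]
    refine sum_congr rfl fun p hp => ?_
    rw [← mem_antidiagonal.1 hp, pow_add]
    ring
  have hs := summable_norm_sum_mul_antidiagonal_of_summable_norm hA.1 hB.1
  refine ⟨by simpa only [key] using hs, ?_⟩
  simp only [key]
  have := hs.of_norm.hasSum
  rwa [← tsum_mul_tsum_eq_tsum_sum_antidiagonal_of_summable_norm hA.1 hB.1, hA.2.tsum_eq,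
    hB.2.tsum_eq] at this

lemma evalsTo_geom {q : ℂ} (hq : ‖q‖ < 1) (k : ℕ) (hk : 0 < k) :
    EvalsTo (PowerSeries.mk fun n => if k ∣ n then (1 : ℂ) else 0) q (1 - q ^ k)⁻¹ := by
  constructor
  · refine (summable_geometric_of_lt_one (norm_nonneg q) hq).of_nonneg_of_le
      (fun _ => norm_nonneg _) fun n => ?_
    rw [PowerSeries.coeff_mk]
    split_ifs <;> simp
  · have hg : HasSum (fun j : ℕ => (q ^ k) ^ j) (1 - q ^ k)⁻¹ :=
      hasSum_geometric_of_norm_lt_one (by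
        rw [norm_pow]; exact pow_lt_one₀ (norm_nonneg _) hq hk.ne')
    have hinj : Function.Injective fun j : ℕ => k * j :=
      fun a b h => Nat.eq_of_mul_eq_mul_left hk h
    refine (hinj.hasSum_iff ?_).1 ?_
    · intro n hn
      have : ¬ k ∣ n := fun ⟨c, hc⟩ => hn ⟨c, hc.symm⟩
      simp [this]
    · convert hg using 2 with j
      simp [pow_mul]

lemma evalsTo_restricted {q : ℂ} (hq : ‖q‖ < 1) (N : ℕ) :
    EvalsTo (PowerSeries.mk fun n => ((Nat.Partition.restricted n (· ≤ N)).card : ℂ)) q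
      (∏ i ∈ range N, (1 - q ^ (i + 1)))⁻¹ := by
  rw [mk_card_restricted_le, ← prod_inv_distrib]
  induction N with
  | zero =>
    have h0 : ∀ n : ℕ, n ≠ 0 → (1 : PowerSeries ℂ).coeff n * q ^ n = 0 := by
      intro n hn; simp [PowerSeries.coeff_one, hn]
    constructor
    · refine (hasSum_single 0 fun n hn => ?_).summable
      simpa using h0 n hn
    · simpa using hasSum_single 0 h0
  | succ N ih =>
    rw [prod_range_succ, prod_range_succ]
    exact ih.mul (evalsTo_geom hq _ N.succ_pos)

lemma card_restricted_of_le {n N : ℕ} (h : n ≤ N) :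
    (Nat.Partition.restricted n (· ≤ N)).card = Fintype.card n.Partition := by
  rw [← card_univ]
  congr 1
  rw [Nat.Partition.restricted, filter_eq_self]
  exact fun p _ i hi => (p.le_of_mem_parts hi).trans h

lemma tprod_one_sub_ne_zero {q : ℂ} (hq : ‖q‖ < 1) : ∏' n : ℕ, (1 - q ^ (n + 1)) ≠ 0 := by
  simp only [sub_eq_add_neg]
  refine tprod_one_add_ne_zero_of_summable (f := fun n : ℕ => -q ^ (n + 1)) (fun i h => ?_) ?_
  · have h1 : q ^ (i + 1) = 1 := by linear_combination -h
    have := pow_lt_one₀ (norm_nonneg q) hq i.succ_ne_zero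
    rw [← norm_pow, Nat.succ_eq_add_one, h1, norm_one] at this
    exact lt_irrefl _ this
  · simpa using (summable_nat_add_iff 1).mpr (summable_geometric_of_lt_one (norm_nonneg _) hq)

lemma tendsto_inv_prod {q : ℂ} (hq : ‖q‖ < 1) :
    Filter.Tendsto (fun N => (∏ i ∈ range N, (1 - q ^ (i + 1)))⁻¹) Filter.atTop
      (nhds (∏' n : ℕ, (1 - q ^ (n + 1)))⁻¹) :=
  (ModularForm.multipliable_one_sub_pow hq).hasProd.tendsto_prod_nat.inv₀
    (tprod_one_sub_ne_zero hq)

/-- The partial sums at `‖q‖` are bounded by the partial products of Euler's product, because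
`restricted n (· ≤ N)` contains all partitions of `n` once `n ≤ N`. -/
lemma summable_card_partition {q : ℂ} (hq : ‖q‖ < 1) :
    Summable fun n => ‖(Fintype.card n.Partition : ℂ) * q ^ n‖ := by
  -- the bound comes from the point `‖q‖` on the positive real axis
  have hr : ‖((‖q‖ : ℝ) : ℂ)‖ < 1 := by simpa using hq
  obtain ⟨C, hC⟩ := (tendsto_inv_prod hr).norm.bddAbove_range
  refine summable_of_sum_range_le (c := C) (fun _ => norm_nonneg _) fun N => ?_
  have h := evalsTo_restricted hr N
  refine le_trans ?_ (hC ⟨N, rfl⟩)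
  have hre := (Complex.hasSum_re h.2)
  have hterm : ∀ n, ((PowerSeries.mk fun n =>
      ((Nat.Partition.restricted n (· ≤ N)).card : ℂ)).coeff n * ((‖q‖ : ℝ) : ℂ) ^ n).re =
      ((Nat.Partition.restricted n (· ≤ N)).card : ℝ) * ‖q‖ ^ n := by
    intro n
    rw [PowerSeries.coeff_mk]
    norm_cast
  simp only [hterm] at hre
  refine le_trans ?_ (Complex.re_le_norm _)
  refine le_trans (le_of_eq ?_) (sum_le_hasSum (range N) (fun n _ => by positivity) hre)
  refine sum_congr rfl fun n hn => ?_
  rw [card_restricted_of_le (mem_range.1 hn).le]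
  simp

/-- Euler's generating function for the number of partitions, as an analytic identity. -/
lemma hasSum_card_partition {q : ℂ} (hq : ‖q‖ < 1) :
    HasSum (fun n => (Fintype.card n.Partition : ℂ) * q ^ n)
      (∏' n : ℕ, (1 - q ^ (n + 1)))⁻¹ := by
  have hs := summable_card_partition hq
  have ht := tendsto_tsum_of_dominated_convergence (𝓕 := Filter.atTop)
    (f := fun N n => ((Nat.Partition.restricted n (· ≤ N)).card : ℂ) * q ^ n)
    (g := fun n => (Fintype.card n.Partition : ℂ) * q ^ n) hs
    (fun n => by
      refine tendsto_const_nhds.congr' ?_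
      filter_upwards [Filter.eventually_ge_atTop n] with N hN
      rw [card_restricted_of_le hN])
    (Filter.Eventually.of_forall fun N n => by
      rw [norm_mul, norm_mul]
      refine mul_le_mul_of_nonneg_right ?_ (norm_nonneg _)
      simpa using card_le_univ (Nat.Partition.restricted n (· ≤ N)))
  have he : ∀ N, ∑' n, ((Nat.Partition.restricted n (· ≤ N)).card : ℂ) * q ^ n =
      (∏ i ∈ range N, (1 - q ^ (i + 1)))⁻¹ := by
    intro N
    simpa using (evalsTo_restricted hq N).2.tsum_eq
  simp only [he] at ht
  rw [tendsto_nhds_unique (tendsto_inv_prod hq) ht]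
  exact hs.of_norm.hasSum

/-! ### The expansion of `h` as a weighted double sum -/

/-- The monomial `x ^ (j * e)` attached to a pair of positive integers, extended by `0` to pairs
with a zero entry. -/
noncomputable def pairMon (x : ℂ) (p : ℕ × ℕ) : ℂ :=
  if p.1 = 0 ∨ p.2 = 0 then 0 else x ^ (p.1 * p.2)

lemma pairMon_swap (x : ℂ) (p : ℕ × ℕ) : pairMon x p.swap = pairMon x p := by
  simp only [pairMon, Prod.fst_swap, Prod.snd_swap, or_comm, mul_comm]

lemma summable_norm_pairMon {x : ℂ} (hx : ‖x‖ < 1) : Summable fun p => ‖pairMon x p‖ := by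
  have hg := summable_geometric_of_lt_one (norm_nonneg x) hx
  have hinj : Function.Injective fun p : ℕ × ℕ => (p.1 + 1, p.2 + 1) := by
    rintro ⟨a, b⟩ ⟨c, d⟩ h
    simpa using h
  refine (hinj.summable_iff ?_).1 ?_
  · rintro ⟨a, b⟩ h
    have : a = 0 ∨ b = 0 := by
      by_contra hc
      push Not at hc
      exact h ⟨(a - 1, b - 1), by ext <;> simp <;> omega⟩
    simp [pairMon, this]
  · refine (hg.mul_of_nonneg hg (fun _ => by positivity) (fun _ => by positivity)).of_nonneg_of_le
      (fun _ => norm_nonneg _) ?_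
    rintro ⟨a, b⟩
    simp only [Function.comp, pairMon, Nat.succ_ne_zero, or_self, if_false, norm_pow, ← pow_add]
    exact pow_le_pow_of_le_one (norm_nonneg _) hx.le (by nlinarith)

lemma summable_norm_mul_pairMon {x : ℂ} (hx : ‖x‖ < 1) (v : ℕ × ℕ → ℤ) (hv : ∀ p, |v p| ≤ 2) :
    Summable fun p => ‖(v p : ℂ) * pairMon x p‖ := by
  refine ((summable_norm_pairMon hx).mul_left 2).of_nonneg_of_le (fun _ => norm_nonneg _) ?_
  intro p
  rw [norm_mul]
  refine mul_le_mul_of_nonneg_right ?_ (norm_nonneg _)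
  rw [Complex.norm_intCast]
  exact_mod_cast hv p

/-- A weight that is antisymmetric in the two factors contributes nothing. -/
lemma hasSum_antisymm {f : ℕ × ℕ → ℂ} (hf : Summable f) (h : ∀ p, f p.swap = -f p) :
    HasSum f 0 := by
  have h1 : ∑' p : ℕ × ℕ, f p.swap = ∑' p, f p := (Equiv.prodComm ℕ ℕ).tsum_eq f
  simp only [h, tsum_neg] at h1
  have h0 : ∑' p, f p = 0 := by linear_combination (-1 / 2 : ℂ) * h1
  exact h0 ▸ hf.hasSum

lemma abs_sign_le (z : ℤ) : |z.sign| ≤ 1 := by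
  rcases lt_trichotomy z 0 with h | rfl | h
  · simp [Int.sign_eq_neg_one_of_neg h]
  · simp
  · simp [Int.sign_eq_one_of_pos h]

/-- The weight of an `m`-string as a function of `j` and `e = j + k`. For `j, e ≥ 1` it vanishes
unless `j ≤ e ≤ 2 * j`. -/
def pairWt (p : ℕ × ℕ) : ℤ := (p.2 - p.1 : ℤ).sign + (2 * p.1 - p.2 : ℤ).sign

lemma pairWt_of_lt {j e : ℕ} (h : e < j) : pairWt (j, e) = 0 := by
  simp only [pairWt]
  rw [Int.sign_eq_neg_one_of_neg (by omega), Int.sign_eq_one_of_pos (by omega)]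
  rfl

lemma pairWt_add (j k : ℕ) (hj : 1 ≤ j) :
    pairWt (j, j + k) = if k ≤ j then (stringWt j k : ℤ) else 0 := by
  simp only [pairWt, stringWt]
  rcases Nat.eq_zero_or_pos k with rfl | hk
  · rw [if_pos (Nat.zero_le _), Int.sign_eq_one_of_pos (a := 2 * (j : ℤ) - _) (by push_cast; omega)]
    simp
  · rw [Int.sign_eq_one_of_pos (by push_cast; omega)]
    rcases lt_trichotomy k j with h | rfl | h
    · rw [Int.sign_eq_one_of_pos (by push_cast; omega), if_pos h.le, if_neg (by omega)]
      norm_num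
    · have : (2 * (k : ℤ) - ((k + k : ℕ) : ℤ)) = 0 := by push_cast; ring
      rw [this, if_pos le_rfl]
      simp
    · rw [Int.sign_eq_neg_one_of_neg (by push_cast; omega), if_neg (by omega)]
      rfl

/-- The reindexing carrying the doubly indexed expansion of `h`, with index `n` of the outer sum
(starting from `n = 0`, as in `hq`) and `l` of the geometric series, to pairs `(j, d)` with `d` odd:
even `n` gives the pairs with `d < 2 * j`, odd `n` the pairs with `2 * j < d`. -/
def oddPair (p : ℕ × ℕ) : ℕ × ℕ :=
  if p.1 % 2 = 0 then (p.1 / 2 + 1 + p.2, p.1 + 1) else ((p.1 + 1) / 2, p.1 + 2 + 2 * p.2)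

lemma oddPair_injective : Function.Injective oddPair := by
  rintro ⟨a, b⟩ ⟨c, d⟩ h
  simp only [oddPair] at h
  split_ifs at h <;> simp only [Prod.mk.injEq] at h ⊢ <;> omega

lemma oddPair_range {p : ℕ × ℕ} (h1 : p.1 ≠ 0) (h2 : p.2 % 2 = 1) : p ∈ Set.range oddPair := by
  obtain ⟨j, d⟩ := p
  simp only at h1 h2
  by_cases h : d < 2 * j
  · refine ⟨(d - 1, j - 1 - (d - 1) / 2), ?_⟩
    rw [oddPair, if_pos (by simp only; omega), Prod.mk.injEq]
    simp only
    omega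
  · refine ⟨(2 * j - 1, (d - (2 * j + 1)) / 2), ?_⟩
    rw [oddPair, if_neg (by simp only; omega), Prod.mk.injEq]
    simp only
    omega

lemma oddPair_even (i l : ℕ) : oddPair (2 * i, l) = (i + 1 + l, 2 * i + 1) := by
  simp [oddPair]

lemma oddPair_odd (i l : ℕ) : oddPair (2 * i + 1, l) = (i + 1, 2 * i + 3 + 2 * l) := by
  have h : ¬ (2 * i + 1) % 2 = 0 := by omega
  rw [oddPair, if_neg h]
  refine Prod.ext ?_ ?_
  · show (2 * i + 1 + 1) / 2 = i + 1
    omega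
  · show 2 * i + 1 + 2 + 2 * l = 2 * i + 3 + 2 * l
    omega

/-- The exponent of the term `(n, l)` in the expansion of `h` is the product of the two entries of
`oddPair (n, l)`. -/
lemma triangle_exponent (n l : ℕ) :
    (oddPair (n, l)).1 * (oddPair (n, l)).2 = (n + 1) * (n + 2) / 2 + (n + 1) * l := by
  rcases Nat.even_or_odd' n with ⟨i, rfl | rfl⟩
  · have h1 := oddPair_even i l
    have h2 : (2 * i + 1) * (2 * i + 2) / 2 = (2 * i + 1) * (i + 1) := by
      rw [show (2 * i + 1) * (2 * i + 2) = (2 * i + 1) * (i + 1) * 2 by ring]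
      exact Nat.mul_div_cancel _ two_pos
    rw [h1, h2]
    ring
  · have h1 := oddPair_odd i l
    have h2 : (2 * i + 1 + 1) * (2 * i + 1 + 2) / 2 = (i + 1) * (2 * i + 3) := by
      rw [show (2 * i + 1 + 1) * (2 * i + 1 + 2) = (i + 1) * (2 * i + 3) * 2 by ring]
      exact Nat.mul_div_cancel _ two_pos
    rw [h1, h2]
    ring

/-- The weight `sign (2 * j - d)` restricted to odd `d`. -/
def oddWt (p : ℕ × ℕ) : ℤ := if p.2 % 2 = 1 then (2 * p.1 - p.2 : ℤ).sign else 0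

lemma oddWt_oddPair (n l : ℕ) : oddWt (oddPair (n, l)) = (-1) ^ n := by
  rcases Nat.even_or_odd' n with ⟨i, rfl | rfl⟩
  · have h1 := oddPair_even i l
    rw [h1, oddWt, if_pos (by simp only; omega), Int.sign_eq_one_of_pos (by push_cast; omega)]
    simp
  · have h1 := oddPair_odd i l
    rw [h1, oddWt, if_pos (by simp only; omega), Int.sign_eq_neg_one_of_neg (by push_cast; omega)]
    simp [pow_succ]

lemma abs_oddWt_le (p : ℕ × ℕ) : |oddWt p| ≤ 2 := by
  unfold oddWt
  split_ifs
  · exact (abs_sign_le _).trans (by norm_num)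
  · simp

lemma hasSum_oddWt {x : ℂ} (hx : ‖x‖ < 1) :
    HasSum (fun p => (oddWt p : ℂ) * pairMon x p) (hq x) := by
  have hs := (summable_norm_mul_pairMon hx oddWt abs_oddWt_le).of_norm.hasSum
  have h2 := (oddPair_injective.hasSum_iff (fun p hp => ?_)).2 hs
  swap
  · by_cases h1 : p.1 = 0
    · simp [pairMon, h1]
    · by_cases h2 : p.2 % 2 = 1
      · exact absurd (oddPair_range h1 h2) hp
      · simp [oddWt, h2]
  have h3 := h2.prod_fiberwise
    (g := fun n : ℕ => (-1 : ℂ) ^ n * x ^ ((n + 1) * (n + 2) / 2) / (1 - x ^ (n + 1)))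
    (fun n => by
      have hg : HasSum (fun l : ℕ => (x ^ (n + 1)) ^ l) (1 - x ^ (n + 1))⁻¹ :=
        hasSum_geometric_of_norm_lt_one (by
          rw [norm_pow]; exact pow_lt_one₀ (norm_nonneg _) hx n.succ_ne_zero)
      rw [div_eq_mul_inv]
      have he : ∀ l, ((fun p => (oddWt p : ℂ) * pairMon x p) ∘ oddPair) (n, l) =
          ((-1 : ℂ) ^ n * x ^ ((n + 1) * (n + 2) / 2)) * (x ^ (n + 1)) ^ l := by
        intro l
        have hpos : ¬ ((oddPair (n, l)).1 = 0 ∨ (oddPair (n, l)).2 = 0) := by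
          rcases Nat.even_or_odd' n with ⟨i, rfl | rfl⟩
          · rw [oddPair_even]; simp
          · rw [oddPair_odd]; simp
        rw [Function.comp_apply, oddWt_oddPair, pairMon, if_neg hpos, triangle_exponent, pow_add,
          pow_mul]
        push_cast
        ring
      simp only [he]
      exact hg.mul_left _)
  rw [hq, h3.tsum_eq]
  exact hs

/-- The identity `h(x) = ∑ stringWt j k * x ^ (j * (j + k))`, written as a sum over the pairs
`(j, e)` with `e = j + k`. -/
lemma hasSum_pairWt {x : ℂ} (hx : ‖x‖ < 1) :
    HasSum (fun p => (pairWt p : ℂ) * pairMon x p) (hq x) := by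
  have hA : HasSum (fun p : ℕ × ℕ => (((p.2 - p.1 : ℤ).sign : ℤ) : ℂ) * pairMon x p) 0 := by
    refine hasSum_antisymm (summable_norm_mul_pairMon hx
      (fun p => (p.2 - p.1 : ℤ).sign) (fun p => (abs_sign_le _).trans (by norm_num))).of_norm ?_
    intro p
    rw [pairMon_swap, Prod.fst_swap, Prod.snd_swap, ← neg_sub, Int.sign_neg]
    push_cast
    ring
  -- for even `e = 2 * i` the weight `sign (2 * j - e)` is antisymmetric in `j` and `i`
  have hE : HasSum (fun p : ℕ × ℕ =>
      (if p.2 % 2 = 0 then (((2 * p.1 - p.2 : ℤ).sign : ℤ) : ℂ) else 0) * pairMon x p) 0 := by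
    have hinj : Function.Injective fun p : ℕ × ℕ => (p.1, 2 * p.2) := by
      rintro ⟨a, b⟩ ⟨c, d⟩ h
      simpa using h
    have hsum : Summable (fun p : ℕ × ℕ =>
      (if p.2 % 2 = 0 then (((2 * p.1 - p.2 : ℤ).sign : ℤ) : ℂ) else 0) * pairMon x p) := by
      have hb : ∀ p : ℕ × ℕ, |if p.2 % 2 = 0 then (2 * p.1 - p.2 : ℤ).sign else 0| ≤ 2 := by
        intro p
        split_ifs
        · exact (abs_sign_le _).trans (by norm_num)
        · simp
      refine (summable_congr fun p => ?_).1 (summable_norm_mul_pairMon hx _ hb).of_norm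
      split_ifs <;> simp
    have hz : ∀ p ∉ Set.range fun p : ℕ × ℕ => (p.1, 2 * p.2),
      (if p.2 % 2 = 0 then (((2 * p.1 - p.2 : ℤ).sign : ℤ) : ℂ) else 0) * pairMon x p = 0 := by
      rintro ⟨a, b⟩ hp
      have : ¬ b % 2 = 0 := fun h => hp ⟨(a, b / 2), by ext <;> simp; omega⟩
      simp [this]
    refine (hinj.hasSum_iff hz).1 (hasSum_antisymm ((hinj.summable_iff hz).2 hsum) ?_)
    rintro ⟨a, b⟩
    have e1 : (2 * (b : ℤ) - (2 * a : ℕ)).sign = -(2 * (a : ℤ) - (2 * b : ℕ)).sign := by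
      rw [← Int.sign_neg]; congr 1; push_cast; ring
    have e2 : pairMon x (b, 2 * a) = pairMon x (a, 2 * b) := by
      simp only [pairMon, mul_eq_zero, two_ne_zero, false_or, or_comm]
      congr 2; ring
    simp only [Function.comp, Prod.swap_prod_mk, e1, e2, Nat.mul_mod_right, if_true]
    push_cast
    ring
  have := (hA.add hE).add (hasSum_oddWt hx)
  simp only [zero_add] at this
  convert this using 2 with p
  simp only [pairWt, oddWt]
  rcases Nat.mod_two_eq_zero_or_one p.2 with h | h <;> simp [h] <;> ring

/-! ### Strings in partitions -/

/-- Adjoining the parts in `S` is a bijection from the partitions of `t` to the partitions of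
`t + ∑ S` that contain every element of `S` as a part. -/
lemma card_partition_containing (S : Finset ℕ) (hS : ∀ i ∈ S, 0 < i) (t : ℕ) :
    (univ.filter fun p : (t + ∑ i ∈ S, i).Partition => ∀ i ∈ S, i ∈ p.parts).card =
      Fintype.card t.Partition := by
  have hsum : S.val.sum = ∑ i ∈ S, i := by rw [sum_eq_multiset_sum, Multiset.map_id']
  have hle : ∀ p : (t + ∑ i ∈ S, i).Partition, (∀ i ∈ S, i ∈ p.parts) → S.val ≤ p.parts :=
    fun p hp => (Multiset.le_iff_subset S.nodup).2 fun i hi => hp i hi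
  rw [← card_univ]
  symm
  refine card_bij (fun r _ => ⟨r.parts + S.val, ?_, ?_⟩) ?_ ?_ ?_
  · intro i hi
    rcases Multiset.mem_add.1 hi with h | h
    · exact r.parts_pos h
    · exact hS i h
  · rw [Multiset.sum_add, r.parts_sum, hsum]
  · intro r _
    simp only [mem_filter, mem_univ, true_and]
    exact fun i hi => Multiset.mem_add.2 (Or.inr hi)
  · intro r _ r' _ h
    exact Nat.Partition.ext (add_right_cancel (congrArg Nat.Partition.parts h))
  · intro p hp
    have h := hle p (mem_filter.1 hp).2
    refine ⟨⟨p.parts - S.val, fun hi => p.parts_pos (Multiset.mem_of_le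
      (Multiset.sub_le_self _ _) hi), ?_⟩, mem_univ _, ?_⟩
    · have h1 : (p.parts - S.val + S.val).sum = t + ∑ i ∈ S, i := by
        rw [Multiset.sub_add_cancel h, p.parts_sum]
      rw [Multiset.sum_add, hsum] at h1
      exact Nat.add_right_cancel h1
    · exact Nat.Partition.ext (Multiset.sub_add_cancel h)

lemma card_partition_containing_eq_zero (S : Finset ℕ) {n : ℕ} (hn : n < ∑ i ∈ S, i) :
    (univ.filter fun p : n.Partition => ∀ i ∈ S, i ∈ p.parts).card = 0 := by
  rw [card_eq_zero, filter_eq_empty_iff]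
  intro p _ hp
  have hle : S.val ≤ p.parts := (Multiset.le_iff_subset S.nodup).2 fun i hi => hp i hi
  obtain ⟨u, hu⟩ := Multiset.le_iff_exists_add.1 hle
  have h1 := p.parts_sum
  have hsum : S.val.sum = ∑ i ∈ S, i := by rw [sum_eq_multiset_sum, Multiset.map_id']
  rw [hu, Multiset.sum_add, hsum] at h1
  omega

/-- The parts of the `m`-string with parameters `j` and `k`. -/
def stringParts (m j k : ℕ) : Finset ℕ := (Icc 1 j).image fun i => m * (2 * i - 1 + k)

lemma sum_stringParts {m : ℕ} (hm : 0 < m) (j k : ℕ) :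
    ∑ i ∈ stringParts m j k, i = m * (j * (j + k)) := by
  rw [stringParts, sum_image]
  · rw [← mul_sum]
    congr 1
    induction j with
    | zero => simp
    | succ j ih =>
      rw [sum_Icc_succ_top (by omega), ih]
      have : 2 * (j + 1) - 1 = 2 * j + 1 := by omega
      rw [this]
      ring
  · intro a ha b hb h
    have ha := (mem_Icc.1 ha).1
    have hb := (mem_Icc.1 hb).1
    have := Nat.eq_of_mul_eq_mul_left hm h
    omega

/-- The number of partitions of `n` containing the `m`-string with parameters `j` and `k`. -/
def numString (m j k n : ℕ) : ℕ :=
  (univ.filter fun p : n.Partition => ∀ i ∈ Icc 1 j, m * (2 * i - 1 + k) ∈ p.parts).card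

lemma numString_eq (m j k n : ℕ) : numString m j k n =
    (univ.filter fun p : n.Partition => ∀ i ∈ stringParts m j k, i ∈ p.parts).card := by
  simp only [numString, stringParts, forall_mem_image]

lemma numString_add {m : ℕ} (hm : 0 < m) (j k t : ℕ) :
    numString m j k (t + m * (j * (j + k))) = Fintype.card t.Partition := by
  rw [numString_eq, ← sum_stringParts hm]
  refine card_partition_containing _ (fun i hi => ?_) t
  obtain ⟨a, ha, rfl⟩ := mem_image.1 hi
  have := (mem_Icc.1 ha).1
  exact Nat.mul_pos hm (by omega)

lemma numString_of_lt {m : ℕ} (hm : 0 < m) {j k n : ℕ} (h : n < m * (j * (j + k))) :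
    numString m j k n = 0 := by
  rw [numString_eq]
  exact card_partition_containing_eq_zero _ (by rwa [sum_stringParts hm])

/-- `stringWt` extended by `0` to all pairs `(j, k)` that are not the parameters of a string. -/
def extWt (p : ℕ × ℕ) : ℕ := if 1 ≤ p.1 ∧ p.2 ≤ p.1 then stringWt p.1 p.2 else 0

/-- Counting pairs of a partition and a string by the string. -/
lemma Cstr_eq_s8 (m n : ℕ) :
    Cstr m n = ∑ p ∈ Icc 1 n ×ˢ Icc 0 n, extWt p * numString m p.1 p.2 n := by
  rw [Cstr, sum_comm, sum_product]
  refine sum_congr rfl fun j hj => ?_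
  have hj := mem_Icc.1 hj
  rw [sum_comm]
  have hsub : Icc 0 j ⊆ Icc 0 n := Icc_subset_Icc_right hj.2
  rw [← sum_subset hsub]
  · refine sum_congr rfl fun k hk => ?_
    rw [extWt, if_pos ⟨hj.1, (mem_Icc.1 hk).2⟩, numString, ← sum_filter, sum_const, smul_eq_mul,
      mul_comm]
  · intro k _ hk
    have : ¬ k ≤ j := fun h => hk (mem_Icc.2 ⟨Nat.zero_le _, h⟩)
    simp [extWt, this]

lemma extWt_mul_pow (q : ℂ) (m j k : ℕ) :
    (extWt (j, k) : ℂ) * q ^ (m * (j * (j + k))) =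
      (pairWt (j, j + k) : ℂ) * pairMon (q ^ m) (j, j + k) := by
  rcases Nat.eq_zero_or_pos j with rfl | hj
  · simp [extWt, pairMon]
  · have h0 : ¬ (j = 0 ∨ j + k = 0) := by omega
    rw [pairWt_add j k hj, pairMon, if_neg h0, pow_mul, extWt]
    by_cases hk : k ≤ j
    · rw [if_pos ⟨hj, hk⟩, if_pos hk]
      push_cast
      rfl
    · simp [hk]

lemma addPair_injective : Function.Injective fun p : ℕ × ℕ => (p.1, p.1 + p.2) := by
  rintro ⟨a, b⟩ ⟨c, d⟩ h
  simp only [Prod.mk.injEq] at h ⊢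
  omega

lemma abs_pairWt_le (p : ℕ × ℕ) : |pairWt p| ≤ 2 :=
  (abs_add_le _ _).trans (add_le_add (abs_sign_le _) (abs_sign_le _))

lemma norm_pow_lt_one {q : ℂ} (hq1 : ‖q‖ < 1) {m : ℕ} (hm : 0 < m) : ‖q ^ m‖ < 1 := by
  rw [norm_pow]
  exact pow_lt_one₀ (norm_nonneg _) hq1 hm.ne'

lemma summable_norm_extWt {q : ℂ} (hq1 : ‖q‖ < 1) {m : ℕ} (hm : 0 < m) :
    Summable fun p : ℕ × ℕ => ‖(extWt p : ℂ) * q ^ (m * (p.1 * (p.1 + p.2)))‖ := by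
  have := (summable_norm_mul_pairMon (norm_pow_lt_one hq1 hm) pairWt
    abs_pairWt_le).comp_injective addPair_injective
  refine this.congr ?_
  rintro ⟨j, k⟩
  simp only [Function.comp]
  rw [extWt_mul_pow]

/-- `h(q ^ m)` is the generating function of the weighted `m`-strings by their size. -/
lemma hasSum_extWt {q : ℂ} (hq1 : ‖q‖ < 1) {m : ℕ} (hm : 0 < m) :
    HasSum (fun p : ℕ × ℕ => (extWt p : ℂ) * q ^ (m * (p.1 * (p.1 + p.2)))) (hq (q ^ m)) := by
  have h := (addPair_injective.hasSum_iff ?_).2 (hasSum_pairWt (norm_pow_lt_one hq1 hm))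
  · have he : (fun p : ℕ × ℕ => (extWt p : ℂ) * q ^ (m * (p.1 * (p.1 + p.2)))) =
        (fun p => (pairWt p : ℂ) * pairMon (q ^ m) p) ∘ fun p : ℕ × ℕ => (p.1, p.1 + p.2) :=
      funext fun p => extWt_mul_pow q m p.1 p.2
    rwa [he]
  · rintro ⟨j, e⟩ hp
    have : e < j := by
      by_contra hc
      exact hp ⟨(j, e - j), by ext <;> simp; omega⟩
    simp [pairWt_of_lt this]

/-- The generating function of `Cstr m`: a partition together with a string in it amounts to the
string and the partition formed by the remaining parts. -/
lemma hasSum_Cstr {q : ℂ} (hq1 : ‖q‖ < 1) {m : ℕ} (hm : 0 < m) :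
    HasSum (fun n => (Cstr m n : ℂ) * q ^ n)
      ((∏' n : ℕ, (1 - q ^ (n + 1)))⁻¹ * hq (q ^ m)) := by
  have hsm := summable_mul_of_summable_norm
    (f := fun p : ℕ × ℕ => (extWt p : ℂ) * q ^ (m * (p.1 * (p.1 + p.2))))
    (g := fun t : ℕ => (Fintype.card t.Partition : ℂ) * q ^ t)
    (summable_norm_extWt hq1 hm) (summable_card_partition hq1)
  have hG := HasSum.mul (f := fun p : ℕ × ℕ => (extWt p : ℂ) * q ^ (m * (p.1 * (p.1 + p.2))))
    (g := fun t : ℕ => (Fintype.card t.Partition : ℂ) * q ^ t)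
    (hasSum_extWt hq1 hm) (hasSum_card_partition hq1) hsm
  -- the first factor is the string, the second the remaining parts; pass to the total size
  let F : (ℕ × ℕ) × ℕ → ℂ := fun x => (extWt x.1 : ℂ) * numString m x.1.1 x.1.2 x.2 * q ^ x.2
  let g : (ℕ × ℕ) × ℕ → (ℕ × ℕ) × ℕ := fun x => (x.1, x.2 + m * (x.1.1 * (x.1.1 + x.1.2)))
  have hg : Function.Injective g := by
    rintro ⟨p, t⟩ ⟨p', t'⟩ h
    simp only [g, Prod.mk.injEq] at h
    obtain ⟨rfl, h⟩ := h
    rw [Nat.add_right_cancel h]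
  have hF : HasSum F (hq (q ^ m) * (∏' n : ℕ, (1 - q ^ (n + 1)))⁻¹) := by
    refine (hg.hasSum_iff ?_).1 ?_
    · rintro ⟨⟨j, k⟩, n⟩ hx
      have : n < m * (j * (j + k)) := by
        by_contra hc
        exact hx ⟨((j, k), n - m * (j * (j + k))), Prod.ext rfl (by simp only [g]; omega)⟩
      simp [F, numString_of_lt hm this]
    · have he : F ∘ g = fun x : (ℕ × ℕ) × ℕ =>
          ((extWt x.1 : ℂ) * q ^ (m * (x.1.1 * (x.1.1 + x.1.2)))) *
            ((Fintype.card x.2.Partition : ℂ) * q ^ x.2) := by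
        funext x
        simp only [F, g, Function.comp, numString_add hm, pow_add]
        ring
      rw [he]
      exact hG
  rw [mul_comm]
  refine ((Equiv.prodComm ℕ (ℕ × ℕ)).hasSum_iff.2 hF).prod_fiberwise fun n => ?_
  have hfin := hasSum_sum_of_ne_finset_zero (L := SummationFilter.unconditional (ℕ × ℕ))
    (f := fun p : ℕ × ℕ => F (p, n)) (s := Icc 1 n ×ˢ Icc 0 n) ?_
  · have hv : (Cstr m n : ℂ) * q ^ n = ∑ p ∈ Icc 1 n ×ˢ Icc 0 n, F (p, n) := by
      rw [Cstr_eq_s8]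
      push_cast
      rw [sum_mul]
    rw [hv]
    exact hfin
  · rintro ⟨j, k⟩ hp
    simp only [F]
    by_cases h : 1 ≤ j ∧ k ≤ j
    · have hnj : n < j := by
        by_contra hc
        exact hp (mem_product.2 ⟨mem_Icc.2 ⟨h.1, by simp only; omega⟩,
          mem_Icc.2 ⟨Nat.zero_le _, by simp only; omega⟩⟩)
      have h1 : j ≤ m * (j * (j + k)) :=
        (Nat.le_mul_of_pos_right j (by omega)).trans (Nat.le_mul_of_pos_left _ hm)
      simp [numString_of_lt hm (hnj.trans_le h1)]
    · simp [extWt, h]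

/-! ### Coefficients of power series on the unit disc -/

lemma mem_unit_eball (q : ℂ) : q ∈ Metric.eball (0 : ℂ) 1 ↔ ‖q‖ < 1 := by
  rw [Metric.mem_eball, edist_zero_right, ← ofReal_norm, ENNReal.ofReal_lt_one]

/-- A power series converging on the open unit disc represents its sum there. -/
lemma hasFPowerSeriesOnBall_of_hasSum {a : ℕ → ℂ} {f : ℂ → ℂ}
    (h : ∀ q : ℂ, ‖q‖ < 1 → HasSum (fun n => a n * q ^ n) (f q)) :
    HasFPowerSeriesOnBall f (FormalMultilinearSeries.ofScalars ℂ a) 0 1 := by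
  refine ⟨?_, one_pos, ?_⟩
  · refine ENNReal.le_of_forall_nnreal_lt fun r hr => ?_
    have hr' : (r : ℝ) < 1 := by exact_mod_cast hr
    have hs := (h (r : ℝ) (by simpa using hr')).summable.norm
    refine FormalMultilinearSeries.le_radius_of_summable_norm _ (hs.congr fun n => ?_)
    simp
  · intro y hy
    have hy' := (mem_unit_eball y).1 hy
    simpa [mul_comm] using h y hy'

lemma coeff_unique {a b : ℕ → ℂ} {f : ℂ → ℂ}
    (ha : ∀ q : ℂ, ‖q‖ < 1 → HasSum (fun n => a n * q ^ n) (f q))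
    (hb : ∀ q : ℂ, ‖q‖ < 1 → HasSum (fun n => b n * q ^ n) (f q)) : a = b := by
  have h := (hasFPowerSeriesOnBall_of_hasSum ha).hasFPowerSeriesAt.eq_formalMultilinearSeries
    (hasFPowerSeriesOnBall_of_hasSum hb).hasFPowerSeriesAt
  funext n
  have := congrArg (fun p => FormalMultilinearSeries.coeff p n) h
  simpa [FormalMultilinearSeries.coeff_ofScalars] using this

/-- Suppose that `∑ a n * q ^ n = ∑' c n * q ^ n` on the unit disc, where the left side converges,
`a` is real and `c` is nonnegative. Then each `a n` is nonnegative, even though the right side is not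
assumed to converge: if it diverges at `q₀`, it diverges (and so has the value `0`) at
every `q` with `‖q₀‖ ≤ ‖q‖`, so that the left side vanishes identically. -/
lemma nonneg_of_eq_tsum {a : ℕ → ℝ} {c : ℕ → ℝ} {f : ℂ → ℂ}
    (ha : ∀ q : ℂ, ‖q‖ < 1 → HasSum (fun n => (a n : ℂ) * q ^ n) (f q)) (hc : ∀ n, 0 ≤ c n)
    (h : ∀ q : ℂ, ‖q‖ < 1 → f q = ∑' n, (c n : ℂ) * q ^ n) (n : ℕ) : 0 ≤ a n := by
  by_cases hs : ∀ q : ℂ, ‖q‖ < 1 → Summable fun n => (c n : ℂ) * q ^ n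
  · have := coeff_unique (b := fun n => (c n : ℂ)) ha fun q hq1 => h q hq1 ▸ (hs q hq1).hasSum
    have := congrFun this n
    rw [Complex.ofReal_inj] at this
    exact this ▸ hc n
  · push Not at hs
    obtain ⟨q₀, hq₀, hns⟩ := hs
    have hzero : ∀ q : ℂ, ‖q₀‖ < ‖q‖ → ‖q‖ < 1 → f q = 0 := by
      intro q h1 h2
      rw [h q h2]
      refine tsum_eq_zero_of_not_summable fun hsum => hns ?_
      refine Summable.of_norm_bounded hsum.norm fun n => ?_
      rw [norm_mul, norm_mul, norm_pow, norm_pow]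
      gcongr
    have hball := hasFPowerSeriesOnBall_of_hasSum ha
    obtain ⟨r, hr1, hr2⟩ := exists_between hq₀
    have hr0 : 0 ≤ r := (norm_nonneg _).trans hr1.le
    have hnr : ‖(r : ℂ)‖ = r := by simp [abs_of_nonneg hr0]
    have hpre : IsPreconnected (Metric.eball (0 : ℂ) 1) := by
      have : Metric.eball (0 : ℂ) 1 = Metric.ball 0 1 := by
        ext q; rw [mem_unit_eball]; simp
      rw [this]
      exact (convex_ball _ _).isPreconnected
    have hf0 : Set.EqOn f 0 (Metric.eball (0 : ℂ) 1) := by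
      refine hball.analyticOnNhd.eqOn_zero_of_preconnected_of_eventuallyEq_zero hpre
        (z₀ := (r : ℂ)) ((mem_unit_eball _).2 (by rw [hnr]; exact hr2)) ?_
      have e1 : ∀ᶠ z : ℂ in nhds (r : ℂ), ‖q₀‖ < ‖z‖ :=
        continuous_norm.continuousAt.eventually (lt_mem_nhds (hnr.symm ▸ hr1 : ‖q₀‖ < ‖(r : ℂ)‖))
      have e2 : ∀ᶠ z : ℂ in nhds (r : ℂ), ‖z‖ < 1 :=
        continuous_norm.continuousAt.eventually (gt_mem_nhds (hnr.symm ▸ hr2 : ‖(r : ℂ)‖ < 1))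
      filter_upwards [e1, e2] with z h1 h2 using hzero z h1 h2
    have := coeff_unique (b := fun _ => 0) ha fun q hq1 => by
      rw [hf0 ((mem_unit_eball q).2 hq1)]
      simp
    have := congrFun this n
    rw [Complex.ofReal_eq_zero] at this
    exact this.ge

/-- for `m ≥ 2`, the identity `∑_{n≥1} C_m(n) q^n = h(q^m)/(q;q)_∞`
holds for `‖q‖ < 1`, and consequently the Andrews–Chan–Kim–Osburn conjecture that
`(h(q) − m h(q^m))/(q;q)_∞` has nonnegative coefficients is equivalent to
`C_1(n) ≥ m C_m(n)` for all `n ≥ 1`. -/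
theorem stmt8 (m : ℕ) (hm : 2 ≤ m) :
    (∀ q : ℂ, ‖q‖ < 1 →
      ∑' n : ℕ, (Cstr m n : ℂ) * q ^ n =
        (∏' n : ℕ, (1 - q ^ (n + 1)))⁻¹ * hq (q ^ m)) ∧
    ((∃ c : ℕ → ℝ, (∀ n, 0 ≤ c n) ∧ ∀ q : ℂ, ‖q‖ < 1 →
        (∏' n : ℕ, (1 - q ^ (n + 1)))⁻¹ * (hq q - m * hq (q ^ m)) =
          ∑' n : ℕ, (c n : ℂ) * q ^ n) ↔
      ∀ n : ℕ, 1 ≤ n → m * Cstr m n ≤ Cstr 1 n) := by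
  have hm0 : 0 < m := by omega
  have hdiff : ∀ q : ℂ, ‖q‖ < 1 →
      HasSum (fun n => (((Cstr 1 n : ℝ) - m * Cstr m n : ℝ) : ℂ) * q ^ n)
        ((∏' n : ℕ, (1 - q ^ (n + 1)))⁻¹ * (hq q - m * hq (q ^ m))) := by
    intro q hq1
    have h1 := hasSum_Cstr hq1 one_pos
    rw [pow_one] at h1
    have h2 := h1.sub ((hasSum_Cstr hq1 hm0).mul_left (m : ℂ))
    have he : (∏' n : ℕ, (1 - q ^ (n + 1)))⁻¹ * (hq q - m * hq (q ^ m)) =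
        (∏' n : ℕ, (1 - q ^ (n + 1)))⁻¹ * hq q -
          m * ((∏' n : ℕ, (1 - q ^ (n + 1)))⁻¹ * hq (q ^ m)) := by ring
    rw [he]
    have hf : ∀ n, (((Cstr 1 n : ℝ) - m * Cstr m n : ℝ) : ℂ) * q ^ n =
        (Cstr 1 n : ℂ) * q ^ n - m * ((Cstr m n : ℂ) * q ^ n) := by
      intro n
      push_cast
      ring
    simp only [hf]
    exact h2
  refine ⟨fun q hq1 => (hasSum_Cstr hq1 hm0).tsum_eq, ?_, ?_⟩
  · rintro ⟨c, hc, h⟩ n _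
    have := nonneg_of_eq_tsum hdiff hc h n
    rw [sub_nonneg] at this
    exact_mod_cast this
  · intro h
    refine ⟨fun n => (Cstr 1 n : ℝ) - m * Cstr m n, fun n => ?_, fun q hq1 =>
      (hdiff q hq1).tsum_eq.symm⟩
    rw [sub_nonneg]
    rcases Nat.eq_zero_or_pos n with rfl | hn
    · simp [Cstr]
    · exact_mod_cast h n hn
end
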